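/- arXiv:1808.04712 — 2 statements merged into one kernel-verified Lean document; each statement's English description precedes it below -/
import Mathlib

section
/- Let E be a finite set, ρ a rank function on E, k > 0 with ρ(U)/k ∈ ℕ for all U ⊆ E, and d > 0 with d/k ∈ ℕ and d ≤ ρ(E). Fix s ∈ ℝ^E_{≥0} and for each e ∈ E a non-negative, non-decreasing, differentiable, convex function c_e : ℝ → ℝ, and define f(y) = Σ_{e∈E} c_e(s_e + y_e)·y_e for y ∈ ℝ^E_{≥0}. Then a point x ∈ P^k_ρ(d) minimizes f over P^k_ρ(d) if and only if for every ordered pair (e, f) ∈ E × E the following holds: if there exists α > 0 such that x + α(χ_e − χ_f) ∈ P_ρ(d), then (x_e + k)·c_e(s_e + x_e + k) − x_e·c_e(s_e + x_e) ≥ x_f·c_f(s_f + x_f) − (x_f − k)·c_f(s_f + x_f − k). -/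
/-- A rank function: submodular, monotone, normalized set function. -/
def IsRank {E : Type*} [Fintype E] [DecidableEq E] (ρ : Finset E → ℝ) : Prop :=
  (∀ U V : Finset E, ρ (U ∪ V) + ρ (U ∩ V) ≤ ρ U + ρ V) ∧
  (∀ U V : Finset E, U ⊆ V → ρ U ≤ ρ V) ∧ ρ ∅ = 0

/-- Membership in the polymatroid base polytope `P_ρ(d)`. -/
def memBase {E : Type*} [Fintype E] [DecidableEq E] (ρ : Finset E → ℝ) (d : ℝ)
    (x : E → ℝ) : Prop :=
  (∀ e, 0 ≤ x e) ∧ (∀ U : Finset E, ∑ e ∈ U, x e ≤ ρ U) ∧ (∑ e, x e = d)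

/-- Membership in the `k`-integral base polytope `P^k_ρ(d)`. -/
def memKBase {E : Type*} [Fintype E] [DecidableEq E] (ρ : Finset E → ℝ) (d k : ℝ)
    (x : E → ℝ) : Prop :=
  memBase ρ d x ∧ ∀ e, ∃ q : ℕ, x e = k * q

open Finset

section Increments

/-- Increments of a convex function over an interval of fixed length are nondecreasing. -/
theorem ConvexOn.increment_le {c : ℝ → ℝ} (hc : ConvexOn ℝ Set.univ c) {k t u : ℝ}
    (hk : 0 < k) (htu : t ≤ u) : c (t + k) - c t ≤ c (u + k) - c u := by
  have hL : 0 < u - t + k := by linarith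
  have hw : (u - t) / (u - t + k) + k / (u - t + k) = 1 := by field_simp
  have ha : 0 ≤ (u - t) / (u - t + k) := div_nonneg (by linarith) hL.le
  have hb : 0 ≤ k / (u - t + k) := div_nonneg hk.le hL.le
  have h₁ := hc.2 (Set.mem_univ t) (Set.mem_univ (u + k)) ha hb hw
  have h₂ := hc.2 (Set.mem_univ t) (Set.mem_univ (u + k)) hb ha (by linarith)
  simp only [smul_eq_mul] at h₁ h₂
  rw [show (u - t) / (u - t + k) * t + k / (u - t + k) * (u + k) = t + k by
    field_simp; ring] at h₁
  rw [show k / (u - t + k) * t + (u - t) / (u - t + k) * (u + k) = u by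
    field_simp; ring] at h₂
  linear_combination h₁ + h₂ + (c t + c (u + k)) * hw

/-- Increments of `t ↦ c (s + t) * t` are nondecreasing on the nonnegative reals. -/
theorem ConvexOn.increment_mul_le {c : ℝ → ℝ} (hc : ConvexOn ℝ Set.univ c) (hm : Monotone c)
    {k t u : ℝ} (s : ℝ) (hk : 0 < k) (ht : 0 ≤ t) (htu : t ≤ u) :
    c (s + (t + k)) * (t + k) - c (s + t) * t ≤ c (s + (u + k)) * (u + k) - c (s + u) * u := by
  have h₁ := hc.increment_le hk (add_le_add_right htu s)
  rw [add_assoc, add_assoc] at h₁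
  have h₂ : c (s + t) ≤ c (s + (t + k)) := hm (by linarith)
  have h₃ : c (s + (t + k)) ≤ c (s + (u + k)) := hm (by linarith)
  have h₄ := mul_le_mul htu h₁ (by linarith) (ht.trans htu)
  have h₅ := mul_le_mul_of_nonneg_left h₃ hk.le
  linarith

end Increments

section Exchange

variable {E : Type*}

/-- The point `x + α (χ_e - χ_f)`. -/
def exchange [DecidableEq E] (x : E → ℝ) (α : ℝ) (e f : E) : E → ℝ :=
  fun e' => x e' + α * ((if e' = e then 1 else 0) - (if e' = f then 1 else 0))

theorem exchange_left [DecidableEq E] (x : E → ℝ) (α : ℝ) {e f : E} (hef : e ≠ f) :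
    exchange x α e f e = x e + α := by
  simp [exchange, hef]

theorem exchange_right [DecidableEq E] (x : E → ℝ) (α : ℝ) {e f : E} (hef : e ≠ f) :
    exchange x α e f f = x f - α := by
  simp [exchange, hef.symm, sub_eq_add_neg]

theorem exchange_of_ne [DecidableEq E] (x : E → ℝ) (α : ℝ) {e f a : E} (hae : a ≠ e)
    (haf : a ≠ f) : exchange x α e f a = x a := by
  simp [exchange, hae, haf]

theorem sum_exchange [DecidableEq E] (x : E → ℝ) (α : ℝ) (e f : E) (U : Finset E) :
    ∑ a ∈ U, exchange x α e f a =
      ∑ a ∈ U, x a + α * ((if e ∈ U then 1 else 0) - (if f ∈ U then 1 else 0)) := by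
  simp only [exchange, sum_add_distrib, ← mul_sum, sum_sub_distrib, sum_ite_eq']

theorem sum_separable_exchange [Fintype E] [DecidableEq E] (G : E → ℝ → ℝ) (x : E → ℝ) (α : ℝ)
    {e f : E} (hef : e ≠ f) :
    ∑ a, G a (exchange x α e f a) =
      ∑ a, G a (x a) + (G e (x e + α) - G e (x e)) + (G f (x f - α) - G f (x f)) := by
  have h : ∀ a, G a (exchange x α e f a) =
      G a (x a) + (if a = e then G e (x e + α) - G e (x e) else 0) +
        (if a = f then G f (x f - α) - G f (x f) else 0) := by
    intro a
    by_cases hae : a = e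
    · subst hae
      simp [exchange_left _ _ hef, hef]
    by_cases haf : a = f
    · subst haf
      simp [exchange_right _ _ hef, hae]
    · simp [exchange_of_ne _ _ hae haf, hae, haf]
  simp only [h, sum_add_distrib, sum_ite_eq', mem_univ, if_true]

theorem exists_nat_sum_eq_mul {k : ℝ} {x : E → ℝ} (hx : ∀ e, ∃ q : ℕ, x e = k * q)
    (U : Finset E) : ∃ q : ℕ, ∑ e ∈ U, x e = k * q := by
  choose q hq using hx
  exact ⟨∑ e ∈ U, q e, by simp [hq, mul_sum]⟩

/-- Distinct multiples of `k` differ by at least `k`. -/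
theorem add_le_of_lt_of_multiples {k a b : ℝ} (hk : 0 < k) (ha : ∃ q : ℕ, a = k * q)
    (hb : ∃ q : ℕ, b = k * q) (hab : a < b) : a + k ≤ b := by
  obtain ⟨p, rfl⟩ := ha
  obtain ⟨q, rfl⟩ := hb
  have h : p < q := by exact_mod_cast lt_of_mul_lt_mul_left hab hk.le
  have h' : (p : ℝ) + 1 ≤ q := by exact_mod_cast h
  linarith [mul_le_mul_of_nonneg_left h' hk.le]

/-- A packet of size `k` can be moved from `f` to `e` unless `f` carries no load or a tight set
separates `e` from `f`. -/
theorem memKBase.exchange_mem [Fintype E] [DecidableEq E] {ρ : Finset E → ℝ} {d k : ℝ}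
    {x : E → ℝ} (hx : memKBase ρ d k x) (hk : 0 < k) (hρk : ∀ U, ∃ q : ℕ, ρ U = k * q) {e f : E}
    (hef : e ≠ f) (hf : 0 < x f)
    (hU : ∀ U : Finset E, e ∈ U → f ∉ U → ∑ a ∈ U, x a < ρ U) :
    memKBase ρ d k (exchange x k e f) := by
  obtain ⟨⟨hnonneg, hle, hsum⟩, hint⟩ := hx
  have hkf : k ≤ x f := by
    simpa using add_le_of_lt_of_multiples hk ⟨0, by simp⟩ (hint f) hf
  refine ⟨⟨fun a => ?_, fun U => ?_, ?_⟩, fun a => ?_⟩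
  · by_cases hae : a = e
    · subst hae
      rw [exchange_left _ _ hef]
      linarith [hnonneg a]
    by_cases haf : a = f
    · subst haf
      rw [exchange_right _ _ hef]
      linarith
    · rw [exchange_of_ne _ _ hae haf]
      exact hnonneg a
  · rw [sum_exchange]
    by_cases he : e ∈ U <;> by_cases hfU : f ∈ U
    · simpa [he, hfU] using hle U
    · simpa [he, hfU] using
        add_le_of_lt_of_multiples hk (exists_nat_sum_eq_mul hint U) (hρk U) (hU U he hfU)
    · have := hle U
      simp only [he, hfU, if_true, if_false]
      linarith
    · simpa [he, hfU] using hle U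
  · rw [sum_exchange]
    simpa using hsum
  · by_cases hae : a = e
    · subst hae
      obtain ⟨q, hq⟩ := hint a
      exact ⟨q + 1, by rw [exchange_left _ _ hef, hq]; push_cast; ring⟩
    by_cases haf : a = f
    · subst haf
      obtain ⟨q, hq⟩ := hint a
      have hq1 : 1 ≤ q := by
        rcases Nat.eq_zero_or_pos q with rfl | h
        · simp [hq] at hf
        · exact h
      exact ⟨q - 1, by rw [exchange_right _ _ hef, hq]; push_cast [hq1]; ring⟩
    · rw [exchange_of_ne _ _ hae haf]
      exact hint a

/-- If some positive amount can be moved from `f` to `e`, then a packet of size `k` can. -/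
theorem memKBase.exchange_mem_of_pos [Fintype E] [DecidableEq E] {ρ : Finset E → ℝ} {d k α : ℝ}
    {x : E → ℝ} (hx : memKBase ρ d k x) (hk : 0 < k) (hρk : ∀ U, ∃ q : ℕ, ρ U = k * q) {e f : E}
    (hef : e ≠ f) (hα : 0 < α) (h : memBase ρ d (exchange x α e f)) :
    memKBase ρ d k (exchange x k e f) := by
  refine hx.exchange_mem hk hρk hef ?_ fun U he hf => ?_
  · have := h.1 f
    rw [exchange_right _ _ hef] at this
    linarith
  · have := h.2.1 U
    rw [sum_exchange] at this
    simp only [he, hf, if_true, if_false] at this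
    linarith

end Exchange

section Tight

variable {E : Type*} [DecidableEq E]

/-- For a point below a submodular function, tight sets are closed under union and
intersection. -/
theorem tight_union_inter {r : Finset E → ℝ}
    (hr : ∀ U V : Finset E, r (U ∪ V) + r (U ∩ V) ≤ r U + r V) {x : E → ℝ}
    (hx : ∀ U : Finset E, ∑ a ∈ U, x a ≤ r U) {U V : Finset E}
    (hU : ∑ a ∈ U, x a = r U) (hV : ∑ a ∈ V, x a = r V) :
    ∑ a ∈ U ∪ V, x a = r (U ∪ V) ∧ ∑ a ∈ U ∩ V, x a = r (U ∩ V) := by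
  have h₁ := hr U V
  have h₂ := hx (U ∪ V)
  have h₃ := hx (U ∩ V)
  have h₄ := sum_union_inter (s₁ := U) (s₂ := V) (f := x)
  constructor <;> linarith

/-- There is a least tight set containing `e`. -/
theorem exists_least_tight [Fintype E] {r : Finset E → ℝ}
    (hr : ∀ U V : Finset E, r (U ∪ V) + r (U ∩ V) ≤ r U + r V) {x : E → ℝ}
    (hx : ∀ U : Finset E, ∑ a ∈ U, x a ≤ r U) (htop : ∑ a, x a = r univ) (e : E) :
    ∃ D : Finset E, e ∈ D ∧ ∑ a ∈ D, x a = r D ∧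
      ∀ U : Finset E, e ∈ U → ∑ a ∈ U, x a = r U → D ⊆ U := by
  classical
  let F : Finset (Finset E) := univ.filter fun U => e ∈ U ∧ ∑ a ∈ U, x a = r U
  have hF : ∀ U, U ∈ F ↔ e ∈ U ∧ ∑ a ∈ U, x a = r U := fun U => by simp [F]
  obtain ⟨h₁, h₂⟩ : e ∈ F.inf id ∧ ∑ a ∈ F.inf id, x a = r (F.inf id) :=
    Finset.inf_induction (p := fun U => e ∈ U ∧ ∑ a ∈ U, x a = r U) ⟨mem_univ e, htop⟩
      (fun U hU V hV => ⟨mem_inter.2 ⟨hU.1, hV.1⟩, (tight_union_inter hr hx hU.2 hV.2).2⟩)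
      (fun U hU => (hF U).1 hU)
  exact ⟨F.inf id, h₁, h₂, fun U he hU => Finset.inf_le (f := id) ((hF U).2 ⟨he, hU⟩)⟩

/-- There is a largest tight set avoiding `e`. -/
theorem exists_greatest_tight [Fintype E] {r : Finset E → ℝ}
    (hr : ∀ U V : Finset E, r (U ∪ V) + r (U ∩ V) ≤ r U + r V) {x : E → ℝ}
    (hx : ∀ U : Finset E, ∑ a ∈ U, x a ≤ r U) (hbot : r ∅ = 0) (e : E) :
    ∃ T : Finset E, e ∉ T ∧ ∑ a ∈ T, x a = r T ∧
      ∀ U : Finset E, e ∉ U → ∑ a ∈ U, x a = r U → U ⊆ T := by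
  classical
  let F : Finset (Finset E) := univ.filter fun U => e ∉ U ∧ ∑ a ∈ U, x a = r U
  have hF : ∀ U, U ∈ F ↔ e ∉ U ∧ ∑ a ∈ U, x a = r U := fun U => by simp [F]
  obtain ⟨h₁, h₂⟩ : e ∉ F.sup id ∧ ∑ a ∈ F.sup id, x a = r (F.sup id) :=
    Finset.sup_induction (p := fun U => e ∉ U ∧ ∑ a ∈ U, x a = r U)
      ⟨notMem_empty e, by simp [hbot]⟩
      (fun U hU V hV => ⟨by simp [hU.1, hV.1], (tight_union_inter hr hx hU.2 hV.2).1⟩)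
      (fun U hU => (hF U).1 hU)
  exact ⟨F.sup id, h₁, h₂, fun U he hU => Finset.le_sup (f := id) ((hF U).2 ⟨he, hU⟩)⟩

/-- If `x e < y e`, some `f` with `y f < x f` is separated from `e` neither by an `x`-tight set
containing `e` only, nor by a `y`-tight set containing `f` only. -/
theorem exists_symmetric_exchange [Fintype E] {r : Finset E → ℝ}
    (hr : ∀ U V : Finset E, r (U ∪ V) + r (U ∩ V) ≤ r U + r V) (hbot : r ∅ = 0) {x y : E → ℝ}
    (hx : ∀ U : Finset E, ∑ a ∈ U, x a ≤ r U) (hxtop : ∑ a, x a = r univ)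
    (hy : ∀ U : Finset E, ∑ a ∈ U, y a ≤ r U) {e : E} (he : x e < y e) :
    ∃ f, y f < x f ∧ (∀ U : Finset E, e ∈ U → f ∉ U → ∑ a ∈ U, x a < r U) ∧
      ∀ U : Finset E, f ∈ U → e ∉ U → ∑ a ∈ U, y a < r U := by
  obtain ⟨D, heD, hD, hDmin⟩ := exists_least_tight hr hx hxtop e
  obtain ⟨T, heT, hT, hTmax⟩ := exists_greatest_tight hr hy hbot e
  obtain ⟨f, hfD, hf⟩ : ∃ f ∈ D \ T, y f < x f := by
    by_contra! h
    have hlt : ∑ a ∈ D \ T, x a < ∑ a ∈ D \ T, y a :=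
      sum_lt_sum h ⟨e, mem_sdiff.2 ⟨heD, heT⟩, he⟩
    have h₁ := hr D T
    have h₂ := hy (D ∪ T)
    have h₃ := hx (D ∩ T)
    have h₄ : ∑ a ∈ D ∩ T, x a + ∑ a ∈ D \ T, x a = ∑ a ∈ D, x a :=
      sum_inter_add_sum_sdiff D T x
    have h₅ : ∑ a ∈ D \ T, y a + ∑ a ∈ T, y a = ∑ a ∈ D ∪ T, y a := by
      rw [← sum_union sdiff_disjoint, sdiff_union_self_eq_union]
    linarith
  rw [mem_sdiff] at hfD
  exact ⟨f, hf, fun U heU hfU => (hx U).lt_of_ne fun h => hfU (hDmin U heU h hfD.1),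
    fun U hfU heU => (hy U).lt_of_ne fun h => hfD.2 (hTmax U heU h hfU)⟩

end Tight

section Base

variable {E : Type*} [Fintype E] [DecidableEq E] {ρ : Finset E → ℝ} {d k : ℝ} {x y : E → ℝ}

/-- Truncating a rank function at `d` preserves submodularity. -/
theorem IsRank.truncate_submodular (hρ : IsRank ρ) (d : ℝ) (U V : Finset E) :
    min (ρ (U ∪ V)) d + min (ρ (U ∩ V)) d ≤ min (ρ U) d + min (ρ V) d := by
  have h := hρ.1 U V
  have hU := hρ.2.1 U (U ∪ V) subset_union_left
  have hV := hρ.2.1 V (U ∪ V) subset_union_right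
  have hU' := hρ.2.1 (U ∩ V) U inter_subset_left
  have hV' := hρ.2.1 (U ∩ V) V inter_subset_right
  rcases le_total (ρ (U ∪ V)) d with h₁ | h₁ <;> rcases le_total (ρ (U ∩ V)) d with h₂ | h₂ <;>
    rcases le_total (ρ U) d with h₃ | h₃ <;> rcases le_total (ρ V) d with h₄ | h₄ <;>
    simp only [min_eq_left, min_eq_right, h₁, h₂, h₃, h₄] <;> linarith

theorem memBase.sum_le_truncate (hx : memBase ρ d x) (U : Finset E) :
    ∑ a ∈ U, x a ≤ min (ρ U) d :=
  le_min (hx.2.1 U) (hx.2.2 ▸ sum_le_univ_sum_of_nonneg hx.1)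

/-- Symmetric exchange of a packet of size `k` between two distinct `k`-integral bases. -/
theorem memKBase.exists_exchange (hρ : IsRank ρ) (hk : 0 < k)
    (hρk : ∀ U, ∃ q : ℕ, ρ U = k * q) (hd : 0 < d) (hdρ : d ≤ ρ univ)
    (hx : memKBase ρ d k x) (hy : memKBase ρ d k y) (hxy : x ≠ y) :
    ∃ e f, e ≠ f ∧ x e + k ≤ y e ∧ y f + k ≤ x f ∧
      memKBase ρ d k (exchange x k e f) ∧ memKBase ρ d k (exchange y k f e) := by
  obtain ⟨e, he⟩ : ∃ e, x e < y e := by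
    by_contra! h
    have := (sum_eq_sum_iff_of_le fun a _ => h a).1 (hy.1.2.2.trans hx.1.2.2.symm)
    exact hxy (funext fun a => (this a (mem_univ a)).symm)
  obtain ⟨f, hf, hU, hV⟩ := exists_symmetric_exchange (hρ.truncate_submodular d)
    (by rw [hρ.2.2, min_eq_left hd.le]) hx.1.sum_le_truncate
    (by rw [hx.1.2.2, min_eq_right hdρ]) hy.1.sum_le_truncate he
  have hef : e ≠ f := by
    rintro rfl
    exact lt_asymm he hf
  exact ⟨e, f, hef, add_le_of_lt_of_multiples hk (hx.2 e) (hy.2 e) he,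
    add_le_of_lt_of_multiples hk (hy.2 f) (hx.2 f) hf,
    hx.exchange_mem hk hρk hef ((hy.1.1 f).trans_lt hf)
      fun U h h' => (hU U h h').trans_le (min_le_left _ _),
    hy.exchange_mem hk hρk hef.symm ((hx.1.1 e).trans_lt he)
      fun U h h' => (hV U h h').trans_le (min_le_left _ _)⟩

/-- For a separable cost with nondecreasing increments, a `k`-integral base that no exchange of
a single packet improves is a global minimizer. -/
theorem memKBase.sum_le_of_exchange (hρ : IsRank ρ) (hk : 0 < k)
    (hρk : ∀ U, ∃ q : ℕ, ρ U = k * q) (hd : 0 < d) (hdρ : d ≤ ρ univ) {G : E → ℝ → ℝ}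
    (hG : ∀ e t u, 0 ≤ t → t ≤ u → G e (t + k) - G e t ≤ G e (u + k) - G e u)
    (hx : memKBase ρ d k x)
    (hloc : ∀ e f, e ≠ f → memKBase ρ d k (exchange x k e f) →
      G f (x f) - G f (x f - k) ≤ G e (x e + k) - G e (x e))
    (hy : memKBase ρ d k y) : ∑ a, G a (x a) ≤ ∑ a, G a (y a) := by
  obtain ⟨n, hn⟩ := exists_nat_ge ((∑ a, |y a - x a|) / k)
  rw [div_le_iff₀ hk] at hn
  induction n generalizing y with
  | zero =>
    have h₀ : ∑ a, |y a - x a| = 0 :=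
      le_antisymm (by simpa using hn) (sum_nonneg fun a _ => abs_nonneg _)
    rw [sum_eq_zero_iff_of_nonneg fun a _ => abs_nonneg _] at h₀
    have hyx : y = x := funext fun a => by
      linarith [abs_eq_zero.1 (h₀ a (mem_univ a))]
    rw [hyx]
  | succ n ih =>
    by_cases hxy : x = y
    · rw [hxy]
    obtain ⟨e, f, hef, he, hf, hxmem, hymem⟩ :=
      hx.exists_exchange hρ hk hρk hd hdρ hy hxy
    have hdist := sum_separable_exchange (fun a t => |t - x a|) y k hef.symm
    rw [abs_of_nonpos (show y f + k - x f ≤ 0 by linarith),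
      abs_of_nonpos (show y f - x f ≤ 0 by linarith),
      abs_of_nonneg (show 0 ≤ y e - k - x e by linarith),
      abs_of_nonneg (show 0 ≤ y e - x e by linarith)] at hdist
    have hle := ih hymem (by push_cast at hn; linarith)
    rw [sum_separable_exchange G y k hef.symm] at hle
    have h₁ := hG e (x e) (y e - k) (hx.1.1 e) (by linarith)
    have h₂ := hG f (y f) (x f - k) (hy.1.1 f) (by linarith)
    rw [sub_add_cancel] at h₁ h₂
    linarith [hloc e f hef hxmem]

end Base

/-- Lemma 1 of the paper: a `k`-integral point `x` minimizes the player cost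
`f(y) = Σ_e c_e(s_e + y_e)·y_e` over `P^k_ρ(d)` iff for every pair `(e,f)` for
which a positive fractional exchange is feasible, the cost of adding a packet
to `e` is at least the gain of removing a packet from `f`. -/
theorem stmt_4 {E : Type*} [Fintype E] [DecidableEq E]
    (ρ : Finset E → ℝ) (hρ : IsRank ρ)
    (k : ℝ) (hk : 0 < k) (hρk : ∀ U, ∃ q : ℕ, ρ U = k * q)
    (d : ℝ) (hd : 0 < d) (hdk : ∃ q : ℕ, d = k * q) (hdρ : d ≤ ρ Finset.univ)
    (s : E → ℝ) (hs : ∀ e, 0 ≤ s e)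
    (c : E → ℝ → ℝ)
    (hcnonneg : ∀ e t, 0 ≤ c e t) (hcmono : ∀ e, Monotone (c e))
    (hcdiff : ∀ e, Differentiable ℝ (c e)) (hcconv : ∀ e, ConvexOn ℝ Set.univ (c e))
    (x : E → ℝ) (hx : memKBase ρ d k x) :
    (∀ y, memKBase ρ d k y →
        ∑ e, c e (s e + x e) * x e ≤ ∑ e, c e (s e + y e) * y e) ↔
      (∀ e f : E,
        (∃ α > 0, memBase ρ d
          (fun e' => x e' + α * ((if e' = e then 1 else 0) - (if e' = f then 1 else 0)))) →
        (x e + k) * c e (s e + x e + k) - x e * c e (s e + x e) ≥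
          x f * c f (s f + x f) - (x f - k) * c f (s f + x f - k)) := by
  constructor
  · rintro hmin e f ⟨α, hα, hmem⟩
    rcases eq_or_ne e f with rfl | hef
    · have hxe := hx.1.1 e
      have h₁ := (hcconv e).increment_le hk (show s e + x e - k ≤ s e + x e by linarith)
      rw [sub_add_cancel] at h₁
      have h₂ : c e (s e + x e - k) ≤ c e (s e + x e + k) := hcmono e (by linarith)
      linarith [mul_le_mul_of_nonneg_left h₁ hxe, mul_le_mul_of_nonneg_left h₂ hk.le]
    · have h := hmin _ (hx.exchange_mem_of_pos hk hρk hef hα hmem)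
      rw [sum_separable_exchange (fun a t => c a (s a + t) * t) x k hef] at h
      simp only [← add_assoc, ← add_sub_assoc] at h
      linarith
  · intro hloc y hy
    refine hx.sum_le_of_exchange (G := fun a t => c a (s a + t) * t) hρ hk hρk hd hdρ
      (fun e t u ht htu => (hcconv e).increment_mul_le (hcmono e) (s e) hk ht htu)
      (fun e f hef hmem => ?_) hy
    have h := hloc e f ⟨k, hk, hmem.1⟩
    simp only [← add_assoc, ← add_sub_assoc]
    linarith
end

section
/- Let G be an atomic splittable polymatroid congestion game in which all rank values ρ_i(U) and all demands d_i are rational and in which every cost function c_{i,e} and every derivative c'_{i,e} is L-Lipschitz for some L > 0. Then for every ε > 0 there exists k > 0 with ρ_i(U)/k ∈ ℕ for all players i and all U ⊆ E and d_i/k ∈ ℕ for all i, such that every exact equilibrium of the k-integral game G_k is an ε-approximate equilibrium of G. -/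
open Finset

lemma Rat.exists_common_denominator {ι : Type*} [Fintype ι] (f : ι → ℚ) :
    ∃ D : ℕ, 0 < D ∧ ∀ i, ∃ n : ℤ, f i * D = n := by
  classical
  refine ⟨∏ i, (f i).den, Finset.prod_pos fun i _ => (f i).den_pos, fun i => ?_⟩
  refine ⟨(f i).num * ∏ j ∈ univ.erase i, ((f j).den : ℤ), ?_⟩
  rw [← Finset.mul_prod_erase univ (fun j => (f j).den) (mem_univ i)]
  push_cast
  rw [← mul_assoc, Rat.mul_den_eq_num]

section Rounding

variable {E : Type*} [Fintype E] [DecidableEq E]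

lemma IsRank.nonneg {ρ : Finset E → ℝ} (h : IsRank ρ) (U : Finset E) : 0 ≤ ρ U := by
  have := h.2.1 ∅ U (empty_subset U)
  rwa [h.2.2] at this

lemma IsRank.div {ρ : Finset E → ℝ} (h : IsRank ρ) {k : ℝ} (hk : 0 < k) :
    IsRank fun U => ρ U / k := by
  refine ⟨fun U V => ?_, fun U V hUV => ?_, ?_⟩
  · rw [← add_div, ← add_div]
    exact div_le_div_of_nonneg_right (h.1 U V) hk.le
  · exact div_le_div_of_nonneg_right (h.2.1 U V hUV) hk.le
  · simp [h.2.2]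

lemma memBase.le_demand {ρ : Finset E → ℝ} {d : ℝ} {x : E → ℝ} (h : memBase ρ d x) (e : E) :
    x e ≤ d :=
  h.2.2 ▸ single_le_sum (fun e _ => h.1 e) (mem_univ e)

/-- Tight sets of a point of a polymatroid are closed under intersection. -/
lemma IsRank.tight_inter {ρ : Finset E → ℝ} (h : IsRank ρ) {z : E → ℝ}
    (hz : ∀ U, ∑ e ∈ U, z e ≤ ρ U) {U V : Finset E} (hU : ∑ e ∈ U, z e = ρ U)
    (hV : ∑ e ∈ V, z e = ρ V) : ∑ e ∈ U ∩ V, z e = ρ (U ∩ V) := by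
  have h1 := sum_union_inter (s₁ := U) (s₂ := V) (f := z)
  linarith [h.1 U V, hz (U ∪ V), hz (U ∩ V)]

/-- If `z e` is not an integer, then some other non-integral coordinate `f` lies in every tight
set containing `e`. -/
lemma IsRank.exists_exchange {ρ : Finset E → ℝ} (h : IsRank ρ) (hρint : ∀ U, ∃ q : ℤ, ρ U = q)
    {z : E → ℝ} (hz : ∀ U, ∑ e ∈ U, z e ≤ ρ U) (hd : ∃ q : ℤ, ∑ e, z e = q)
    {e : E} (he : ¬ ∃ q : ℤ, z e = q) :
    ∃ f ≠ e, (¬ ∃ q : ℤ, z f = q) ∧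
      ∀ V, e ∈ V → ∑ a ∈ V, z a = ρ V → f ∈ V := by
  classical
  let T : Finset (Finset E) :=
    univ.filter fun U => e ∈ U ∧ (U = univ ∨ ∑ a ∈ U, z a = ρ U)
  obtain ⟨U, hUT, hmin⟩ := T.exists_min_image card ⟨univ, by simp [T]⟩
  simp only [T, mem_filter, mem_univ, true_and] at hUT hmin
  obtain ⟨heU, hU⟩ := hUT
  have hUint : ∃ q : ℤ, ∑ a ∈ U, z a = q := by
    rcases hU with rfl | hU
    · exact hd
    · rw [hU]; exact hρint U
  have hf : ∃ f ∈ U, f ≠ e ∧ ¬ ∃ q : ℤ, z f = q := by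
    by_contra! hcon
    choose! g hg using hcon
    obtain ⟨q, hq⟩ := hUint
    refine he ⟨q - ∑ a ∈ U.erase e, g a, ?_⟩
    rw [← add_sum_erase U z heU, sum_congr rfl fun a ha =>
      hg a (mem_of_mem_erase ha) (ne_of_mem_erase ha)] at hq
    push_cast
    linarith
  obtain ⟨f, hfU, hfe, hfint⟩ := hf
  refine ⟨f, hfe, hfint, fun V heV hV => ?_⟩
  have hUV : U ∩ V = univ ∨ ∑ a ∈ U ∩ V, z a = ρ (U ∩ V) := by
    rcases hU with rfl | hU
    · right; simpa using hV
    · exact Or.inr (h.tight_inter hz hU hV)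
  have := hmin (U ∩ V) ⟨mem_inter.2 ⟨heU, heV⟩, hUV⟩
  have heq := eq_of_subset_of_card_le inter_subset_left this
  rw [← heq] at hfU
  exact (mem_inter.1 hfU).2

/-- Every point of an integral polymatroid base polytope can be rounded to an integral point of
the polytope, each coordinate changing by at most one. -/
lemma IsRank.exists_integral_near {ρ : Finset E → ℝ} (h : IsRank ρ)
    (hρint : ∀ U, ∃ q : ℤ, ρ U = q) {d : ℝ} (hd : ∃ q : ℤ, d = q) {y : E → ℝ}
    (hy : memBase ρ d y) :
    ∃ z, memBase ρ d z ∧ ∀ e, (∃ q : ℕ, z e = q) ∧ |z e - y e| ≤ 1 := by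
  let l : E → ℝ := fun e => (⌊y e⌋ : ℝ)
  let u : E → ℝ := fun e => (⌈y e⌉ : ℝ)
  let S : Set (E → ℝ) :=
    Set.Icc l u ∩ ({z | ∀ U : Finset E, ∑ e ∈ U, z e ≤ ρ U} ∩ {z | ∑ e, z e = d})
  have hScompact : IsCompact S := by
    refine isCompact_Icc.inter_right (IsClosed.inter ?_ ?_)
    · simp only [Set.ofPred_forall]
      exact isClosed_iInter fun U => isClosed_le (by fun_prop) continuous_const
    · exact isClosed_eq (by fun_prop) continuous_const
  have hSy : y ∈ S :=
    ⟨⟨fun e => Int.floor_le (y e), fun e => Int.le_ceil (y e)⟩, hy.2.1, hy.2.2⟩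
  obtain ⟨z, ⟨⟨hlz, hzu⟩, hzρ, hzd⟩, hmax⟩ :=
    hScompact.exists_isMaxOn ⟨y, hSy⟩ (f := fun z => ∑ e, z e ^ 2) (by fun_prop)
  have hz0 : ∀ e, 0 ≤ z e := fun e =>
    le_trans (Int.cast_nonneg (Int.floor_nonneg.2 (hy.1 e))) (hlz e)
  suffices hzint : ∀ e, ∃ q : ℤ, z e = q by
    refine ⟨z, ⟨hz0, hzρ, hzd⟩, fun e => ⟨?_, ?_⟩⟩
    · obtain ⟨q, hq⟩ := hzint e
      have hq0 : 0 ≤ q := by exact_mod_cast hq ▸ hz0 e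
      lift q to ℕ using hq0
      exact ⟨q, by simpa using hq⟩
    · have h1 : (⌊y e⌋ : ℝ) ≤ z e := hlz e
      have h2 : z e ≤ ⌈y e⌉ := hzu e
      rw [abs_le]
      constructor <;> linarith [Int.lt_floor_add_one (y e), Int.ceil_lt_add_one (y e),
        Int.floor_le (y e), Int.le_ceil (y e)]
  by_contra! hfrac
  classical
  let F : Finset E := univ.filter fun e => ¬ ∃ q : ℤ, z e = q
  obtain ⟨e, heF, hemax⟩ := F.exists_max_image z (by
    obtain ⟨e, he⟩ := hfrac
    exact ⟨e, by simpa [F] using he⟩)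
  have he : ¬ ∃ q : ℤ, z e = q := (mem_filter.1 heF).2
  obtain ⟨f, hfe, hf, hfV⟩ := h.exists_exchange hρint hzρ (by rw [hzd]; exact hd) he
  have hzfe : z f ≤ z e := hemax f (mem_filter.2 ⟨mem_univ f, hf⟩)
  have heu : z e < u e := lt_of_le_of_ne (hzu e) fun h => he ⟨_, h⟩
  have hfl : l f < z f := lt_of_le_of_ne (hlz f) fun h => hf ⟨_, h.symm⟩
  have hsmall : ∀ g : ℝ, 0 < g → ∀ᶠ t in nhdsWithin (0 : ℝ) (Set.Ioi 0), t ≤ g := fun g hg =>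
    mem_nhdsWithin_of_mem_nhds (Iic_mem_nhds hg)
  have hslack : ∀ᶠ t in nhdsWithin (0 : ℝ) (Set.Ioi 0),
      ∀ V : Finset E, ∑ a ∈ V, z a ≠ ρ V → t ≤ ρ V - ∑ a ∈ V, z a := by
    rw [Filter.eventually_all]
    intro V
    by_cases hV : ∑ a ∈ V, z a = ρ V
    · simp [hV]
    · filter_upwards [hsmall _ (sub_pos.2 (lt_of_le_of_ne (hzρ V) hV))] with t ht _ using ht
  obtain ⟨t, hte, htf, htV, ht0⟩ := ((hsmall _ (sub_pos.2 heu)).and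
    ((hsmall _ (sub_pos.2 hfl)).and (hslack.and self_mem_nhdsWithin))).exists
  have ht0 : 0 < t := ht0
  let w : E → ℝ := fun a => z a + ((if a = e then t else 0) - if a = f then t else 0)
  have hwsum : ∀ V : Finset E, ∑ a ∈ V, w a =
      ∑ a ∈ V, z a + ((if e ∈ V then t else 0) - if f ∈ V then t else 0) := fun V => by
    simp [w, sum_add_distrib, sum_sub_distrib]
  have hwS : w ∈ S := by
    refine ⟨⟨fun a => ?_, fun a => ?_⟩, fun V => ?_, ?_⟩
    · have := hlz a
      by_cases hae : a = e
      · subst hae; simp only [w, if_true, if_neg hfe.symm]; linarith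
      · by_cases haf : a = f
        · subst haf; simp only [w, if_true, if_neg hae]; linarith
        · simpa [w, hae, haf] using this
    · have := hzu a
      by_cases hae : a = e
      · subst hae; simp only [w, if_true, if_neg hfe.symm]; linarith
      · by_cases haf : a = f
        · subst haf; simp only [w, if_true, if_neg hae]; linarith
        · simpa [w, hae, haf] using this
    · rw [hwsum]
      have h1 := hzρ V
      by_cases htight : ∑ a ∈ V, z a = ρ V
      · have := hfV V
        split_ifs <;> first | linarith | tauto
      · have := htV V htight
        split_ifs <;> linarith
    · change ∑ a, w a = d
      rw [hwsum]; simpa using hzd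
  have hle : ∑ a, w a ^ 2 ≤ ∑ a, z a ^ 2 := hmax hwS
  have hsq : ∑ a, w a ^ 2 = ∑ a, z a ^ 2 + (2 * t * (z e - z f) + 2 * t ^ 2) := by
    have : ∀ a, w a ^ 2 = z a ^ 2 + ((if a = e then 2 * t * z e + t ^ 2 else 0) +
        if a = f then t ^ 2 - 2 * t * z f else 0) := fun a => by
      by_cases hae : a = e
      · subst hae; simp only [w, if_true, if_neg hfe.symm]; ring
      · by_cases haf : a = f
        · subst haf; simp only [w, if_true, if_neg hae]; ring
        · simp [w, hae, haf]
    simp only [this, sum_add_distrib, sum_ite_eq', mem_univ, if_true]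
    ring
  nlinarith [mul_nonneg ht0.le (sub_nonneg.2 hzfe), pow_pos ht0 2]

/-- Every point of a polymatroid base polytope with `k`-integral data is within `k`, in each
coordinate, of a `k`-integral point of the polytope. -/
lemma IsRank.exists_memKBase_near {ρ : Finset E → ℝ} (h : IsRank ρ) {k : ℝ} (hk : 0 < k)
    (hρint : ∀ U, ∃ q : ℕ, ρ U = k * q) {d : ℝ} (hd : ∃ q : ℕ, d = k * q) {y : E → ℝ}
    (hy : memBase ρ d y) :
    ∃ z, memKBase ρ d k z ∧ ∀ e, |z e - y e| ≤ k := by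
  have hdiv : ∀ a : ℝ, (∃ q : ℕ, a = k * q) → ∃ q : ℤ, a / k = q := by
    rintro _ ⟨q, rfl⟩
    exact ⟨q, by field_simp; simp⟩
  obtain ⟨z, ⟨hz0, hzρ, hzd⟩, hz⟩ := (h.div hk).exists_integral_near
    (fun U => hdiv _ (hρint U)) (hdiv _ hd) (y := fun e => y e / k)
    ⟨fun e => div_nonneg (hy.1 e) hk.le, fun U => by
      rw [← sum_div]; exact div_le_div_of_nonneg_right (hy.2.1 U) hk.le, by
      rw [← sum_div, hy.2.2]⟩
  refine ⟨fun e => k * z e, ⟨⟨fun e => mul_nonneg hk.le (hz0 e), fun U => ?_, ?_⟩, fun e => ?_⟩,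
    fun e => ?_⟩
  · rw [← mul_sum, mul_comm]
    exact (le_div_iff₀ hk).1 (hzρ U)
  · rw [← mul_sum, hzd]
    field_simp
  · obtain ⟨q, hq⟩ := (hz e).1
    exact ⟨q, congrArg (k * ·) hq⟩
  · have : k * z e - y e = k * (z e - y e / k) := by field_simp
    rw [this, abs_mul, abs_of_pos hk]
    simpa using mul_le_mul_of_nonneg_left (hz e).2 hk.le

end Rounding

/-- Finitely many non-negative rationals are natural multiples of an arbitrarily small packet
size. -/
lemma exists_packet_size {ι : Type*} [Fintype ι] (f : ι → ℝ) (hf : ∀ i, ∃ q : ℚ, f i = q)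
    (hf0 : ∀ i, 0 ≤ f i) {δ : ℝ} (hδ : 0 < δ) :
    ∃ k > 0, k ≤ δ ∧ ∀ i, ∃ q : ℕ, f i = k * q := by
  choose g hg using hf
  obtain ⟨D, hD, hDg⟩ := Rat.exists_common_denominator g
  obtain ⟨M, hM⟩ := exists_nat_gt (1 / δ)
  have hM0 : (0 : ℝ) < M := (by positivity : (0 : ℝ) < 1 / δ).trans hM
  have hD1 : (1 : ℝ) ≤ D := by exact_mod_cast hD
  have hD0 : (0 : ℝ) < D := zero_lt_one.trans_le hD1
  refine ⟨1 / (D * M), by positivity, ?_, fun i => ?_⟩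
  · rw [div_lt_iff₀ hδ] at hM
    rw [div_le_iff₀ (by positivity)]
    nlinarith [mul_pos hδ hM0]
  · obtain ⟨n, hn⟩ := hDg i
    have hn' : f i * D = n := by rw [hg]; exact_mod_cast hn
    have hn0 : 0 ≤ n := by exact_mod_cast hn' ▸ mul_nonneg (hf0 i) hD0.le
    lift n to ℕ using hn0
    refine ⟨n * M, ?_⟩
    simp only [Int.cast_natCast] at hn'
    push_cast
    rw [← hn']
    field_simp

lemma sum_update_apply {N E : Type*} [Fintype N] [DecidableEq N] (x : N → E → ℝ) (i : N)
    (y : E → ℝ) (e : E) :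
    ∑ j, Function.update x i y j e = y e + ∑ j ∈ univ.erase i, x j e := by
  rw [← add_sum_erase univ _ (mem_univ i), Function.update_self]
  congr 1
  exact sum_congr rfl fun j hj => by rw [Function.update_of_ne (ne_of_mem_erase hj)]

/-- A cost term `c (y + a) * y` changes by at most a multiple of `k` when `y` moves by at most
`k`. -/
lemma cost_term_le {c : ℝ → ℝ} (h0 : ∀ t, 0 ≤ c t) (hm : Monotone c) {L : ℝ} (hL : 0 < L)
    (hlip : ∀ x y, |c y - c x| ≤ L * |y - x|) {y z a k B : ℝ} (hy0 : 0 ≤ y) (hyB : y ≤ B)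
    (hzB : z + a ≤ B) (hzy : |z - y| ≤ k) :
    c (z + a) * z ≤ c (y + a) * y + k * (L * B + c B) := by
  have h1 : c (z + a) - c (y + a) ≤ L * k := by
    refine (le_abs_self _).trans ((hlip _ _).trans ?_)
    rw [add_sub_add_right_eq_sub]
    exact mul_le_mul_of_nonneg_left hzy hL.le
  have hk : 0 ≤ k := (abs_nonneg _).trans hzy
  have h2 : c (z + a) * (z - y) ≤ c B * k :=
    (mul_le_mul_of_nonneg_left ((le_abs_self _).trans hzy) (h0 _)).trans
      (mul_le_mul_of_nonneg_right (hm hzB) hk)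
  have h3 : (c (z + a) - c (y + a)) * y ≤ L * k * B :=
    (mul_le_mul_of_nonneg_right h1 hy0).trans
      (mul_le_mul_of_nonneg_left hyB (mul_nonneg hL.le hk))
  linarith

/-- Theorem 1, the main result of the paper: in an atomic splittable polymatroid
congestion game with rational rank values and demands, and `L`-Lipschitz costs
and derivatives, for every `ε > 0` there is a packet size `k > 0` dividing all
rank values and demands such that every exact equilibrium of the `k`-integral
game `G_k` is an `ε`-approximate equilibrium of `G`. -/
theorem stmt_10 {N E : Type*} [Fintype N] [Nonempty N] [DecidableEq N]
    [Fintype E] [DecidableEq E]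
    (ρ : N → Finset E → ℝ) (hρ : ∀ i, IsRank (ρ i))
    (hρrat : ∀ i U, ∃ q : ℚ, ρ i U = (q : ℝ))
    (d : N → ℝ) (hd : ∀ i, 0 < d i) (hdρ : ∀ i, d i ≤ ρ i Finset.univ)
    (hdrat : ∀ i, ∃ q : ℚ, d i = (q : ℝ))
    (c : N → E → ℝ → ℝ)
    (hcnonneg : ∀ i e t, 0 ≤ c i e t)
    (hcmono : ∀ i e, Monotone (c i e))
    (hcdiff : ∀ i e, Differentiable ℝ (c i e))
    (hcconv : ∀ i e, ConvexOn ℝ Set.univ (c i e))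
    (L : ℝ) (hL : 0 < L)
    (hlip : ∀ i e x y, |c i e y - c i e x| ≤ L * |y - x|)
    (hlip' : ∀ i e x y, |deriv (c i e) y - deriv (c i e) x| ≤ L * |y - x|)
    (ε : ℝ) (hε : 0 < ε) :
    ∃ k > 0, (∀ i U, ∃ q : ℕ, ρ i U = k * q) ∧ (∀ i, ∃ q : ℕ, d i = k * q) ∧
      ∀ x : N → E → ℝ, (∀ i, memKBase (ρ i) (d i) k (x i)) →
        (∀ i yi, memKBase (ρ i) (d i) k yi →
          ∑ e, c i e (∑ j, Function.update x i yi j e) * yi e ≥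
            ∑ e, c i e (∑ j, x j e) * x i e) →
        ∀ i yi, memBase (ρ i) (d i) yi →
          ∑ e, c i e (∑ j, Function.update x i yi j e) * yi e ≥
            ∑ e, c i e (∑ j, x j e) * x i e - ε := by
  have hd0 : ∀ i, 0 ≤ d i := fun i => (hd i).le
  set B : ℝ := ∑ j, d j with hB
  have hB0 : 0 ≤ B := sum_nonneg fun j _ => hd0 j
  set K : ℝ := ∑ i, ∑ e, (L * B + c i e B)
  have hterm : ∀ i e, 0 ≤ L * B + c i e B := fun i e =>
    add_nonneg (mul_nonneg hL.le hB0) (hcnonneg i e B)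
  have hK0 : 0 ≤ K := sum_nonneg fun i _ => sum_nonneg fun e _ => hterm i e
  obtain ⟨k, hk, hkδ, hkint⟩ := exists_packet_size
    (Sum.elim (fun p : N × Finset E => ρ p.1 p.2) d)
    (by rintro (p | i); exacts [hρrat p.1 p.2, hdrat i])
    (by rintro (p | i); exacts [(hρ p.1).nonneg p.2, hd0 i])
    (show 0 < ε / (K + 1) by positivity)
  have hkρ : ∀ i U, ∃ q : ℕ, ρ i U = k * q := fun i U => hkint (Sum.inl (i, U))
  have hkd : ∀ i, ∃ q : ℕ, d i = k * q := fun i => hkint (Sum.inr i)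
  refine ⟨k, hk, hkρ, hkd, fun x hx heq i y hy => ?_⟩
  obtain ⟨z, hz, hzy⟩ := (hρ i).exists_memKBase_near hk (hkρ i) (hkd i) hy
  have hround : ∑ e, c i e (∑ j, Function.update x i z j e) * z e ≤
      ∑ e, c i e (∑ j, Function.update x i y j e) * y e + k * ∑ e, (L * B + c i e B) := by
    rw [mul_sum, ← sum_add_distrib]
    refine sum_le_sum fun e _ => ?_
    rw [sum_update_apply, sum_update_apply]
    refine cost_term_le (hcnonneg i e) (hcmono i e) hL (hlip i e) (hy.1 e) ?_ ?_ (hzy e)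
    · exact (hy.le_demand e).trans (single_le_sum (fun j _ => hd0 j) (mem_univ i))
    · rw [hB, ← add_sum_erase univ d (mem_univ i)]
      exact add_le_add (hz.1.le_demand e) (sum_le_sum fun j _ => (hx j).1.le_demand e)
  have hKi : ∑ e, (L * B + c i e B) ≤ K :=
    single_le_sum (f := fun i => ∑ e, (L * B + c i e B))
      (fun j _ => sum_nonneg fun e _ => hterm j e) (mem_univ i)
  have hkK : k * ∑ e, (L * B + c i e B) ≤ ε := by
    rw [le_div_iff₀ (by positivity)] at hkδ
    linarith [mul_le_mul_of_nonneg_left hKi hk.le]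
  linarith [heq i z hz]
end
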